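/- arXiv:2310.17735 — 4 statements merged into one kernel-verified Lean document; each statement's English description precedes it below -/
import Mathlib

section
/- Let A be a finite nonempty set, and let 𝒫_A denote the set of orthogonal projections in the matrix algebra M_A(ℂ), equipped with the Borel σ-algebra of the norm topology. Then there exist Borel functions λ_a : 𝒫_A → {0,1} and u_a : 𝒫_A → ℂ^A (a ∈ A), with ‖u_a(p)‖ = 1 for all p, such that for every p ∈ 𝒫_A the family (u_a(p))_{a∈A} is orthonormal and p = Σ_{a∈A} λ_a(p) · u_a(p) u_a(p)*, where u u* denotes the rank-one orthogonal projection onto the span of the unit vector u. -/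
open Matrix in
theorem aux_select {X B A : Type*} [MeasurableSpace X] (w : B → X → (A → ℂ)) (l : B → ℝ)
    [Fintype A]
    (hw : ∀ b, Measurable (w b)) (T : Finset B) :
    ∃ (v : X → (A → ℂ)) (c : X → ℝ), Measurable v ∧ Measurable c ∧
      ∀ x, (∃ b ∈ T, w b x ≠ 0) → (∃ b ∈ T, v x = w b x ∧ c x = l b) ∧ v x ≠ 0 := by
  classical
  induction T using Finset.induction_on with
  | empty => exact ⟨fun _ => 0, fun _ => 0, measurable_const, measurable_const, by simp⟩
  | insert a T ha ih =>
    obtain ⟨v, c, hv, hc, h⟩ := ih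
    have hs : MeasurableSet {x | w a x = 0} := (hw a) (measurableSet_singleton 0)
    refine ⟨fun x => if w a x = 0 then v x else w a x, fun x => if w a x = 0 then c x else l a,
      Measurable.ite hs hv (hw a), Measurable.ite hs hc measurable_const, ?_⟩
    rintro x ⟨b, hb, hbx⟩
    by_cases h0 : w a x = 0
    · have hbT : b ∈ T := by
        rcases Finset.mem_insert.1 hb with rfl | h'
        · exact absurd h0 hbx
        · exact h'
      obtain ⟨⟨b', hb', h1⟩, h2⟩ := h x ⟨b, hbT, hbx⟩
      simp only [h0, if_true]
      exact ⟨⟨b', Finset.mem_insert_of_mem hb', h1⟩, h2⟩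
    · simp only [h0, if_false]
      exact ⟨⟨a, Finset.mem_insert_self _ _, rfl, rfl⟩, h0⟩

open Matrix in
theorem aux_trace {A : Type*} [Fintype A] [DecidableEq A] (S : Finset A) (a : A) (ha : a ∉ S)
    (u : A → (A → ℂ)) (hu : ∀ a ∈ S, star (u a) ⬝ᵥ u a = 1) :
    (1 - ∑ b ∈ S, vecMulVec (u b) (star (u b)) : Matrix A A ℂ) ≠ 0 := by
  intro h
  have h1 := congrArg trace h
  rw [trace_sub, trace_one, trace_sum, trace_zero] at h1
  have h2 : ∀ b ∈ S, trace (vecMulVec (u b) (star (u b))) = 1 := by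
    intro b hb
    rw [trace_vecMulVec, dotProduct_comm, hu b hb]
  rw [Finset.sum_congr rfl h2] at h1
  simp only [Finset.sum_const, nsmul_eq_mul, mul_one] at h1
  have h3 : (Fintype.card A : ℂ) = (S.card : ℂ) := sub_eq_zero.1 h1
  have h4 : Fintype.card A = S.card := by exact_mod_cast h3
  have := (Finset.card_eq_iff_eq_univ S).1 h4.symm
  exact ha (this ▸ Finset.mem_univ a)

open Matrix in
theorem aux_orth {A : Type*} [Fintype A] [DecidableEq A] (S : Finset A)
    (u : A → (A → ℂ)) (hu : ∀ a ∈ S, ∀ b ∈ S, star (u a) ⬝ᵥ u b = if a = b then 1 else 0)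
    (a : A) (ha : a ∈ S) :
    star (u a) ᵥ* (1 - ∑ b ∈ S, vecMulVec (u b) (star (u b)) : Matrix A A ℂ) = 0 := by
  rw [vecMul_sub, vecMul_one, vecMul_sum]
  have : ∀ b ∈ S, star (u a) ᵥ* vecMulVec (u b) (star (u b)) =
      if a = b then star (u b) else 0 := by
    intro b hb
    rw [vecMul_vecMulVec, hu a ha b hb]
    split_ifs <;> simp
  rw [Finset.sum_congr rfl this]
  simp [ha]

open Matrix in
theorem aux_vecMul {A : Type*} [Fintype A] (p : Matrix A A ℂ) (hp : p.IsHermitian)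
    (u : A → ℂ) (l : ℝ) (h : p *ᵥ u = l • u) : star u ᵥ* p = l • star u := by
  have := congrArg star h
  rw [star_mulVec, hp.eq] at this
  rw [this]
  simp

open Matrix in
theorem aux_norm {A : Type*} [Fintype A] (w : A → ℂ) (hw : w ≠ 0) :
    star ((Real.sqrt (∑ i, Complex.normSq (w i)))⁻¹ • w) ⬝ᵥ
      ((Real.sqrt (∑ i, Complex.normSq (w i)))⁻¹ • w) = 1 := by
  have h1 : star w ⬝ᵥ w = ((∑ i, Complex.normSq (w i) : ℝ) : ℂ) := by
    simp only [dotProduct, Pi.star_apply, Complex.ofReal_sum, Complex.star_def,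
      Complex.normSq_eq_conj_mul_self]
  have h0 : 0 < ∑ i, Complex.normSq (w i) := by
    obtain ⟨i, hi⟩ := Function.ne_iff.1 hw
    exact Finset.sum_pos' (fun i _ => Complex.normSq_nonneg _)
      ⟨i, Finset.mem_univ _, Complex.normSq_pos.2 hi⟩
  rw [star_smul, smul_dotProduct, dotProduct_smul, h1]
  set t := ∑ i, Complex.normSq (w i)
  have h2 : Real.sqrt t ≠ 0 := (Real.sqrt_pos.2 h0).ne'
  have h3 : (Real.sqrt t)⁻¹ * ((Real.sqrt t)⁻¹ * t) = 1 := by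
    field_simp
    exact (Real.sq_sqrt h0.le).symm
  rw [star_trivial, Complex.real_smul, Complex.real_smul]
  exact_mod_cast h3

open Matrix in
theorem aux_main {X A : Type*} [MeasurableSpace X] [Fintype A] [DecidableEq A]
    (p : X → Matrix A A ℂ) (hpm : ∀ i j, Measurable fun x => p x i j)
    (hp : ∀ x, (p x).IsHermitian) (hpp : ∀ x, p x * p x = p x) (S : Finset A) :
    ∃ (lam : A → X → ℝ) (u : A → X → (A → ℂ)),
      (∀ a, Measurable (lam a)) ∧ (∀ a, Measurable (u a)) ∧
      (∀ a x, lam a x = 0 ∨ lam a x = 1) ∧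
      (∀ x, ∀ a ∈ S, ∀ b ∈ S, star (u a x) ⬝ᵥ u b x = if a = b then 1 else 0) ∧
      (∀ x, ∀ a ∈ S, p x *ᵥ u a x = lam a x • u a x) := by
  induction S using Finset.induction_on with
  | empty =>
    exact ⟨fun _ _ => 0, fun _ _ => 0, fun _ => measurable_const, fun _ => measurable_const,
      by simp, by simp, by simp⟩
  | insert a S ha ih =>
    obtain ⟨lam, u, hlam, hu, h01, ho, he⟩ := ih
    set q : X → Matrix A A ℂ := fun x => 1 - ∑ b ∈ S, vecMulVec (u b x) (star (u b x)) with hq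
    have hum : ∀ b i, Measurable fun x => u b x i := fun b i => (measurable_pi_apply i).comp (hu b)
    have hqm : ∀ i j, Measurable fun x => q x i j := by
      intro i j
      simp only [hq, Matrix.sub_apply, Matrix.sum_apply, vecMulVec_apply, Pi.star_apply]
      refine measurable_const.sub (Finset.measurable_sum _ fun b _ => (hum b i).mul ?_)
      exact continuous_star.measurable.comp (hum b j)
    let r : Bool → X → Matrix A A ℂ := fun t x => if t then p x else 1 - p x
    let l : Bool → ℝ := fun t => if t then 1 else 0
    have hrm : ∀ t i j, Measurable fun x => r t x i j := by
      intro t i j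
      cases t
      · simp only [r, Bool.false_eq_true, if_false, Matrix.sub_apply]
        exact measurable_const.sub (hpm i j)
      · simpa [r] using hpm i j
    have hpr : ∀ t x, p x * r t x = l t • r t x := by
      intro t x
      cases t <;> simp [r, l, mul_sub, hpp]
    have hur : ∀ t x, ∀ b ∈ S, ∃ c : ℝ, star (u b x) ᵥ* r t x = c • star (u b x) := by
      intro t x b hb
      have := aux_vecMul (p x) (hp x) _ _ (he x b hb)
      cases t
      · exact ⟨1 - lam b x, by simp [r, vecMul_sub, this, sub_smul]⟩
      · exact ⟨lam b x, by simp [r, this]⟩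
    let w : A × Bool → X → (A → ℂ) := fun b x j => (r b.2 x * q x) j b.1
    have hwm : ∀ b, Measurable (w b) := by
      intro b
      refine measurable_pi_lambda _ fun j => ?_
      simp only [w, mul_apply]
      exact Finset.measurable_sum _ fun k _ => (hrm _ _ _).mul (hqm _ _)
    obtain ⟨v, c, hv, hc, hsel⟩ := aux_select w (fun b => l b.2) hwm Finset.univ
    have hex : ∀ x, ∃ b ∈ Finset.univ, w b x ≠ 0 := by
      intro x
      by_contra! hcon
      have hz : ∀ t, r t x * q x = 0 := by
        intro t
        ext j i
        exact congrFun (hcon (i, t) (Finset.mem_univ _)) j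
      have h1 := hz true
      have h2 := hz false
      simp only [r, if_true, sub_mul, one_mul, Bool.false_eq_true, if_false] at h1 h2
      rw [h1, sub_zero] at h2
      exact aux_trace S a ha (fun b => u b x)
        (fun b hb => by simpa using ho x b hb b hb) h2
    have hvw : ∀ x, ∃ b, v x = w b x ∧ c x = l b.2 := fun x => by
      obtain ⟨⟨b, -, h⟩, -⟩ := hsel x (hex x)
      exact ⟨b, h⟩
    have hv0 : ∀ x, v x ≠ 0 := fun x => (hsel x (hex x)).2
    have hwcol : ∀ b x, w b x = (r b.2 x * q x) *ᵥ Pi.single b.1 1 := by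
      intro b x
      ext j
      simp [w]
    have hve : ∀ x, p x *ᵥ v x = c x • v x := by
      intro x
      obtain ⟨b, h1, h2⟩ := hvw x
      rw [h1, h2, hwcol, mulVec_mulVec, ← mul_assoc, hpr, smul_mul_assoc, smul_mulVec]
    have hvo : ∀ x, ∀ b ∈ S, star (u b x) ⬝ᵥ v x = 0 := by
      intro x b hb
      obtain ⟨b', h1, h2⟩ := hvw x
      obtain ⟨d, hd⟩ := hur b'.2 x b hb
      have := aux_orth S (fun b => u b x) (ho x) b hb
      rw [h1, hwcol, dotProduct_mulVec, ← vecMul_vecMul, hd, smul_vecMul]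
      change (d • (star (u b x) ᵥ* (1 - ∑ b ∈ S, vecMulVec (u b x) (star (u b x))))) ⬝ᵥ _ = 0
      rw [this]
      simp
    let v' : X → (A → ℂ) := fun x => (Real.sqrt (∑ i, Complex.normSq (v x i)))⁻¹ • v x
    have hv'm : Measurable v' := by
      have hvi : ∀ i, Measurable fun x => v x i := fun i => (measurable_pi_apply i).comp hv
      have hs : Measurable fun x => (Real.sqrt (∑ i, Complex.normSq (v x i)))⁻¹ :=
        (Real.continuous_sqrt.measurable.comp (Finset.measurable_sum _ fun i _ =>
          Complex.continuous_normSq.measurable.comp (hvi i))).inv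
      exact measurable_pi_lambda _ fun i => hs.smul (hvi i)
    have hv'o : ∀ x, ∀ b ∈ S, star (u b x) ⬝ᵥ v' x = 0 := by
      intro x b hb
      simp only [v', dotProduct_smul, hvo x b hb, smul_zero]
    have hv'o2 : ∀ x, ∀ b ∈ S, star (v' x) ⬝ᵥ u b x = 0 := by
      intro x b hb
      have := congrArg star (hv'o x b hb)
      rwa [star_dotProduct, star_star, star_zero] at this
    refine ⟨Function.update lam a c, Function.update u a v', ?_, ?_, ?_, ?_, ?_⟩
    · intro b
      by_cases h : b = a
      · subst h; simpa using hc
      · simpa [h] using hlam b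
    · intro b
      by_cases h : b = a
      · subst h; simpa using hv'm
      · simpa [h] using hu b
    · intro b x
      by_cases h : b = a
      · subst h
        obtain ⟨b', -, h2⟩ := hvw x
        simp only [Function.update_self, h2, l]
        cases b'.2 <;> simp
      · simpa [h] using h01 b x
    · intro x b hb d hd
      by_cases h : b = a
      · by_cases h' : d = a
        · subst h; subst h'
          simpa [v'] using aux_norm (v x) (hv0 x)
        · have hdS := Finset.mem_of_mem_insert_of_ne hd h'
          subst h
          simpa [h', Ne.symm h'] using hv'o2 x d hdS
      · have hbS := Finset.mem_of_mem_insert_of_ne hb h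
        by_cases h' : d = a
        · subst h'
          simpa [h] using hv'o x b hbS
        · have hdS := Finset.mem_of_mem_insert_of_ne hd h'
          simpa [h, h'] using ho x b hbS d hdS
    · intro x b hb
      by_cases h : b = a
      · subst h
        simp only [Function.update_self, v', mulVec_smul, hve x]
        rw [smul_comm]
      · have hbS := Finset.mem_of_mem_insert_of_ne hb h
        simpa [h] using he x b hbS

/-- Borel-measurable selection of spectral decompositions of
orthogonal projections in `M_A(ℂ)`. -/
theorem statement8
    {A : Type*} [Fintype A] [Nonempty A] [DecidableEq A]
    [MeasurableSpace (Matrix A A ℂ)] [BorelSpace (Matrix A A ℂ)]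
    (PA : Set (Matrix A A ℂ))
    (hPA : PA = {p : Matrix A A ℂ | p.IsHermitian ∧ p * p = p}) :
    ∃ (lam : A → PA → ℝ) (u : A → PA → (A → ℂ)),
      (∀ a, Measurable (lam a)) ∧
      (∀ a, Measurable (u a)) ∧
      (∀ a p, lam a p = 0 ∨ lam a p = 1) ∧
      (∀ (p : PA) (a b : A),
        ∑ i : A, (starRingEnd ℂ) (u a p i) * u b p i = if a = b then 1 else 0) ∧
      (∀ p : PA, (p : Matrix A A ℂ)
        = ∑ a : A, lam a p • Matrix.vecMulVec (u a p) (star (u a p))) := by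
  have hP : ∀ x : PA, (x : Matrix A A ℂ).IsHermitian ∧ (x : Matrix A A ℂ) * x = x := by
    intro x
    exact hPA.subset x.2
  have hm : ∀ i j, Measurable fun x : PA => (x : Matrix A A ℂ) i j := by
    intro i j
    have hc : Continuous fun M : Matrix A A ℂ => M i j := by fun_prop
    exact hc.measurable.comp measurable_subtype_coe
  obtain ⟨lam, u, h1, h2, h3, h4, h5⟩ := aux_main (fun x : PA => (x : Matrix A A ℂ)) hm
    (fun x => (hP x).1) (fun x => (hP x).2) Finset.univ
  refine ⟨lam, u, h1, h2, h3, ?_, ?_⟩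
  · intro p a b
    exact h4 p a (Finset.mem_univ _) b (Finset.mem_univ _)
  · intro p
    let U : Matrix A A ℂ := Matrix.of fun i a => u a p i
    have hU : U.conjTranspose * U = 1 := by
      ext a b
      rw [Matrix.one_apply]
      exact h4 p a (Finset.mem_univ _) b (Finset.mem_univ _)
    have hU' : U * U.conjTranspose = 1 := mul_eq_one_comm.1 hU
    have hs : ∑ a : A, Matrix.vecMulVec (u a p) (star (u a p)) = 1 := by
      rw [← hU']
      ext i j
      simp [Matrix.sum_apply, Matrix.mul_apply, Matrix.vecMulVec_apply, U]
    calc (p : Matrix A A ℂ) = p * ∑ a : A, Matrix.vecMulVec (u a p) (star (u a p)) := by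
          rw [hs, mul_one]
      _ = _ := by
          rw [Finset.mul_sum]
          refine Finset.sum_congr rfl fun a _ => ?_
          rw [Matrix.mul_vecMulVec, h5 p a (Finset.mem_univ _), Matrix.smul_vecMulVec]
end

section
/- Let A and B be unital C*-algebras, H a complex Hilbert space, and let φ : A → B(H) and ψ : B → B(H) be unital completely positive linear maps with commuting ranges, i.e. φ(a) ψ(b) = ψ(b) φ(a) for all a ∈ A and b ∈ B. Then there exist a complex Hilbert space K, an isometry V : H → K, and unital *-homomorphisms π : A → B(K) and ρ : B → B(K) with commuting ranges (π(a) ρ(b) = ρ(b) π(a) for all a ∈ A, b ∈ B), such that φ(a) ψ(b) = V* π(a) ρ(b) V for all a ∈ A and b ∈ B. -/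
open ContinuousLinearMap Matrix
open scoped ComplexInnerProductSpace ComplexOrder

universe u

/-- A bundled complex Hilbert space. -/
structure HilbertC : Type (u + 1) where
  carrier : Type u
  [nacg : NormedAddCommGroup carrier]
  [ips : InnerProductSpace ℂ carrier]
  [cs : CompleteSpace carrier]

attribute [instance] HilbertC.nacg HilbertC.ips HilbertC.cs

/-- A linear map `φ : A → B(H)` from a unital C*-algebra is completely positive if,
for every `n` and every positive matrix `M = N* N ∈ Mₙ(A)`, the block operator
`(φ(M i j))_{i,j}` on `Hⁿ` is positive. -/
def IsCPMapCStar {A : Type*}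
    [NormedRing A] [StarRing A] [CStarRing A] [CompleteSpace A]
    [NormedAlgebra ℂ A] [StarModule ℂ A]
    {H : Type*} [NormedAddCommGroup H] [InnerProductSpace ℂ H]
    (φ : A →ₗ[ℂ] (H →L[ℂ] H)) : Prop :=
  ∀ (n : ℕ) (M : Matrix (Fin n) (Fin n) A),
    (∃ N : Matrix (Fin n) (Fin n) A, M = Nᴴ * N) →
    ∀ ξ : Fin n → H, 0 ≤ ∑ i, ∑ j, (⟪ξ i, (φ (M i j)) (ξ j)⟫ : ℂ)

section
open UniformSpace

theorem form_symm {X : Type*} [AddCommGroup X] [Module ℂ X]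
    (F : X →ₗ⋆[ℂ] X →ₗ[ℂ] ℂ) (hF : ∀ x, 0 ≤ F x x) (x y : X) :
    (starRingEnd ℂ) (F y x) = F x y := by
  have h0 := (Complex.le_def.1 (hF x)).2
  have h1 := (Complex.le_def.1 (hF y)).2
  have h2 := (Complex.le_def.1 (hF (x + y))).2
  have h3 := (Complex.le_def.1 (hF (x + Complex.I • y))).2
  simp at h0 h1 h2 h3
  apply Complex.ext <;> simp <;> linarith

theorem gns_abstract {C X : Type u} [Ring C] [StarRing C] [Algebra ℂ C]
    [AddCommGroup X] [Module ℂ X]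
    (F : X →ₗ⋆[ℂ] X →ₗ[ℂ] ℂ) (hF : ∀ x, 0 ≤ F x x)
    (L : C →ₐ[ℂ] Module.End ℂ X) (hL : ∀ c x y, F (L c x) y = F x (L (star c) y))
    (hb : ∀ c, ∃ M : ℝ, 0 ≤ M ∧ ∀ x, (F (L c x) (L c x)).re ≤ M * (F x x).re) :
    ∃ (K : HilbertC.{u}) (ι : X →ₗ[ℂ] K.carrier)
      (π : C →⋆ₐ[ℂ] (K.carrier →L[ℂ] K.carrier)),
      (∀ x y, (⟪ι x, ι y⟫ : ℂ) = F x y) ∧ ∀ c x, π c (ι x) = ι (L c x) := by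
  let core : PreInnerProductSpace.Core ℂ X :=
    { inner := fun x y => F x y
      conj_inner_symm := form_symm F hF
      re_inner_nonneg := fun x => (Complex.le_def.1 (hF x)).1
      add_left := by intros; simp
      smul_left := by intros; simp }
  let i1 : SeminormedAddCommGroup X :=
    InnerProductSpace.Core.toSeminormedAddCommGroup (c := core)
  let i2 : InnerProductSpace ℂ X := InnerProductSpace.ofCore core
  have inner_def : ∀ x y : X, (⟪x, y⟫ : ℂ) = F x y := fun _ _ => rfl
  have hb' : ∀ c, ∃ M : ℝ, ∀ x, ‖L c x‖ ≤ M * ‖x‖ := by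
    intro c
    obtain ⟨M, hM, h⟩ := hb c
    refine ⟨√M, fun x => ?_⟩
    rw [← sq_le_sq₀ (by positivity) (by positivity), mul_pow, Real.sq_sqrt hM,
      @norm_sq_eq_re_inner ℂ, @norm_sq_eq_re_inner ℂ]
    exact h x
  choose M hM using hb'
  let T : C → (X →L[ℂ] X) := fun c => (L c).mkContinuous (M c) (hM c)
  have hT : ∀ c x, T c x = L c x := fun _ _ => rfl
  let π : C →⋆ₐ[ℂ] (Completion X →L[ℂ] Completion X) :=
    { toFun := fun c => (T c).completion
      map_one' := by
        ext x
        induction x using Completion.induction_on with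
        | hp => apply isClosed_eq <;> fun_prop
        | ih x => simp [hT]
      map_mul' := fun a b => by
        ext x
        induction x using Completion.induction_on with
        | hp => apply isClosed_eq <;> fun_prop
        | ih x => simp [hT]
      map_zero' := by
        ext x
        induction x using Completion.induction_on with
        | hp => apply isClosed_eq <;> fun_prop
        | ih x => simpa [hT] using Completion.coe_zero
      map_add' := fun a b => by
        ext x
        induction x using Completion.induction_on with
        | hp => apply isClosed_eq <;> fun_prop
        | ih x => simp [hT, Completion.coe_add]
      commutes' := fun r => by
        ext x
        induction x using Completion.induction_on with
        | hp => apply isClosed_eq <;> fun_prop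
        | ih x => simp [hT, Algebra.algebraMap_eq_smul_one]
      map_star' := fun a => by
        refine (eq_adjoint_iff (T (star a)).completion (T a).completion).mpr ?_
        intro x y
        induction x, y using Completion.induction_on₂ with
        | hp => apply isClosed_eq <;> fun_prop
        | ih x y => simp [hT, inner_def, hL] }
  refine ⟨⟨Completion X⟩, (Completion.toComplL (𝕜 := ℂ) (E := X)).toLinearMap, π, ?_, ?_⟩
  · intro x y
    exact (Completion.inner_coe x y).trans (inner_def x y)
  · intro c x
    change (T c).completion (x : Completion X) = _
    simp [hT]
end

theorem exists_defect {A : Type*}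
    [NormedRing A] [StarRing A] [CStarRing A] [CompleteSpace A]
    [NormedAlgebra ℂ A] [StarModule ℂ A] (a : A) :
    ∃ (M : ℝ) (d : A), 0 ≤ M ∧ star d * d + star a * a = (M : ℂ) • (1 : A) := by
  let : CStarAlgebra A := {}
  let : PartialOrder A := CStarAlgebra.spectralOrder A
  let : StarOrderedRing A := CStarAlgebra.spectralOrderedRing A
  have h := CStarAlgebra.star_mul_le_algebraMap_norm_sq (a := a)
  rw [← sub_nonneg, CStarAlgebra.nonneg_iff_eq_star_mul_self] at h
  obtain ⟨d, hd⟩ := h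
  refine ⟨‖a‖ ^ 2, d, by positivity, ?_⟩
  rw [← hd, Algebra.algebraMap_eq_smul_one]
  simp [← Complex.coe_smul]

theorem cp_gram {A : Type*}
    [NormedRing A] [StarRing A] [CStarRing A] [CompleteSpace A]
    [NormedAlgebra ℂ A] [StarModule ℂ A]
    {H : Type*} [NormedAddCommGroup H] [InnerProductSpace ℂ H]
    {φ : A →ₗ[ℂ] (H →L[ℂ] H)} (h : IsCPMapCStar φ) {n : ℕ} (a : Fin n → A) (ξ : Fin n → H) :
    0 ≤ ∑ i, ∑ j, (⟪ξ i, (φ (star (a i) * a j)) (ξ j)⟫ : ℂ) := by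
  cases n with
  | zero => simp
  | succ n =>
    refine h (n+1) (Matrix.of fun i j => star (a i) * a j)
      ⟨Matrix.of fun i j => if i = 0 then a j else 0, ?_⟩ ξ
    ext i j
    simp [Matrix.mul_apply, Matrix.conjTranspose_apply]

theorem schur_pos {H : Type*} [NormedAddCommGroup H] [InnerProductSpace ℂ H] [CompleteSpace H]
    {n : ℕ} (P Q : Fin n → Fin n → (H →L[ℂ] H))
    (hP : ∀ ξ : Fin n → H, 0 ≤ ∑ i, ∑ j, (⟪ξ i, P i j (ξ j)⟫ : ℂ))
    (hQ : ∀ ξ : Fin n → H, 0 ≤ ∑ i, ∑ j, (⟪ξ i, Q i j (ξ j)⟫ : ℂ))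
    (hc : ∀ i j k l, Commute (P i j) (Q k l)) (ξ : Fin n → H) :
    0 ≤ ∑ i, ∑ j, (⟪ξ i, P i j (Q i j (ξ j))⟫ : ℂ) := by
  classical
  let E := PiLp 2 (fun _ : Fin n => H)
  let pr : Fin n → (E →L[ℂ] H) := fun i => PiLp.proj 2 (fun _ : Fin n => H) i
  let inj : Fin n → (H →L[ℂ] E) := fun i => adjoint (pr i)
  have hpr : ∀ i (x : E), pr i x = x i := fun _ _ => rfl
  have hinj : ∀ i (x : H) j, (inj i x) j = if j = i then x else 0 := by
    intro i x j
    refine ext_inner_left ℂ fun y => ?_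
    have h1 : (⟪(WithLp.toLp 2 (Pi.single j y) : E), inj i x⟫ : ℂ) = ⟪y, inj i x j⟫ := by
      rw [PiLp.inner_apply, Finset.sum_eq_single j]
      · simp
      · intro b _ hb; simp [Pi.single_eq_of_ne hb]
      · simp
    rw [← h1, adjoint_inner_right, hpr]
    by_cases hij : j = i
    · subst hij; simp
    · simp [hij, Pi.single_eq_of_ne (Ne.symm hij)]
  -- blocks
  let D : (H →L[ℂ] H) → (E →L[ℂ] E) := fun T => ∑ k, inj k ∘L T ∘L pr k
  have hD : ∀ T (x : E) i, (D T x) i = T (x i) := by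
    intro T x i
    simp [D, ← hpr, ContinuousLinearMap.sum_apply, map_sum]
    simp [hpr, hinj]
  let q : E →L[ℂ] E := ∑ k, ∑ l, inj k ∘L Q k l ∘L pr l
  have hq : ∀ (x : E) i, (q x) i = ∑ l, Q i l (x l) := by
    intro x i
    simp only [q, ← hpr, ContinuousLinearMap.sum_apply, map_sum, ContinuousLinearMap.comp_apply]
    rw [Finset.sum_comm]
    refine Finset.sum_congr rfl fun l _ => ?_
    simp [hpr, hinj]
  have hqpos : 0 ≤ q := by
    rw [ContinuousLinearMap.nonneg_iff_isPositive, ContinuousLinearMap.isPositive_iff_complex]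
    intro x
    have h := hQ (fun i => x i)
    have e : (⟪x, q x⟫ : ℂ) = ∑ i, ∑ j, (⟪x i, Q i j (x j)⟫ : ℂ) := by
      rw [PiLp.inner_apply]
      simp [hq, inner_sum]
    rw [← e] at h
    have h2 : (⟪q x, x⟫ : ℂ) = ⟪x, q x⟫ := by
      rw [← inner_conj_symm]; exact Complex.conj_eq_iff_im.2 (Complex.le_def.1 h).2.symm
    rw [h2]
    exact ⟨Complex.ext (by simp) (by simpa using (Complex.le_def.1 h).2), (Complex.le_def.1 h).1⟩
  let r := CFC.sqrt q
  have hr2 : r * r = q := CFC.sqrt_mul_sqrt_self q hqpos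
  have hrsa : IsSelfAdjoint r := (CFC.sqrt_nonneg q).isSelfAdjoint
  have hrc : ∀ T, (∀ k l, Commute T (Q k l)) → Commute (D T) r := by
    intro T hT
    have h1 : Commute (D T) q := by
      ext x i
      simp only [ContinuousLinearMap.mul_apply, hD, hq, map_sum]
      refine Finset.sum_congr rfl fun l _ => ?_
      exact DFunLike.congr_fun (hT i l) (x l)
    exact (Commute.cfcₙ_nnreal h1.symm NNReal.sqrt).symm
  let R : Fin n → Fin n → (H →L[ℂ] H) := fun i j => pr i ∘L r ∘L inj j
  have hPR : ∀ i j k l x, P i j (R k l x) = R k l (P i j x) := by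
    intro i j k l x
    have h := DFunLike.congr_fun (hrc (P i j) (hc i j)) (inj l x)
    have h2 : D (P i j) (inj l x) = inj l (P i j x) := by
      ext m
      rw [hD, hinj, hinj]; split_ifs <;> simp
    have h3 := congrArg (fun y : E => y k) h
    simp only [ContinuousLinearMap.mul_apply, hD, h2] at h3
    exact h3
  have hRadj : ∀ i j x y, (⟪R i j x, y⟫ : ℂ) = ⟪x, R j i y⟫ := by
    intro i j x y
    change (⟪pr i (r (inj j x)), y⟫ : ℂ) = ⟪x, pr j (r (inj i y))⟫
    rw [← adjoint_inner_right (pr i), ← adjoint_inner_left (pr j)]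
    change (⟪(r (inj j x)), inj i y⟫ : ℂ) = ⟪inj j x, (r (inj i y))⟫
    rw [← adjoint_inner_right]
    rw [← ContinuousLinearMap.star_eq_adjoint, hrsa.star_eq]
  have hres : ∀ z : E, z = ∑ k, inj k (z k) := by
    intro z
    ext m
    rw [← hpr m (∑ k, _), map_sum]
    simp [hpr, hinj]
  have hQR : ∀ i j x, Q i j x = ∑ k, R i k (R k j x) := by
    intro i j x
    have h1 : pr i (q (inj j x)) = Q i j x := by
      rw [hpr, hq]; simp only [hinj]
      rw [Finset.sum_eq_single j] <;> simp +contextual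
    rw [← h1, ← hr2, ContinuousLinearMap.mul_apply, hres (r (inj j x))]
    simp only [map_sum]
    rfl
  have key : ∑ i, ∑ j, (⟪ξ i, P i j (Q i j (ξ j))⟫ : ℂ)
      = ∑ k, ∑ i, ∑ j, (⟪R k i (ξ i), P i j (R k j (ξ j))⟫ : ℂ) := by
    rw [Finset.sum_comm]
    simp only [hQR, map_sum, inner_sum, hRadj, hPR]
    conv_rhs => rw [Finset.sum_comm]
    rw [Finset.sum_comm]
    refine Finset.sum_congr rfl fun i _ => ?_
    rw [Finset.sum_comm]
  rw [key]
  exact Finset.sum_nonneg fun k _ => hP _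

section
open scoped TensorProduct

noncomputable def gForm {C H : Type*} [Ring C] [StarRing C] [Algebra ℂ C] [StarModule ℂ C]
    [NormedAddCommGroup H] [InnerProductSpace ℂ H] (θ : C →ₗ[ℂ] (H →L[ℂ] H)) :
    (C ⊗[ℂ] H) →ₗ⋆[ℂ] (C ⊗[ℂ] H) →ₗ[ℂ] ℂ :=
  TensorProduct.lift (LinearMap.mk₂'ₛₗ (starRingEnd ℂ) (starRingEnd ℂ)
    (fun (c : C) (ξ : H) => TensorProduct.lift (LinearMap.mk₂ ℂ
      (fun (c' : C) (η : H) => (⟪ξ, θ (star c * c') η⟫ : ℂ))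
      (by intros; simp [mul_add, inner_add_right]) (by intros; simp [inner_smul_right])
      (by intros; simp [inner_add_right]) (by intros; simp [inner_smul_right])))
    (by intros; ext; simp [add_mul, inner_add_right])
    (by intros; ext; simp [inner_smul_right])
    (by intros; ext; simp [inner_add_left])
    (by intros; ext; simp [inner_smul_left, mul_comm]))

theorem gForm_tmul {C H : Type*} [Ring C] [StarRing C] [Algebra ℂ C] [StarModule ℂ C]
    [NormedAddCommGroup H] [InnerProductSpace ℂ H] (θ : C →ₗ[ℂ] (H →L[ℂ] H))
    (c c' : C) (ξ η : H) :
    gForm θ (c ⊗ₜ ξ) (c' ⊗ₜ η) = (⟪ξ, θ (star c * c') η⟫ : ℂ) := rfl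

noncomputable def gAct (C H : Type*) [Ring C] [Algebra ℂ C]
    [AddCommGroup H] [Module ℂ H] : C →ₐ[ℂ] Module.End ℂ (C ⊗[ℂ] H) :=
  AlgHom.ofLinearMap
    { toFun := fun c => TensorProduct.map (LinearMap.mulLeft ℂ c) LinearMap.id
      map_add' := by intros; ext; simp [add_mul, TensorProduct.add_tmul]
      map_smul' := by intros; ext; simp [TensorProduct.smul_tmul'] }
    (by ext; simp) (by intros; ext; simp [mul_assoc])

theorem gAct_tmul {C H : Type*} [Ring C] [Algebra ℂ C]
    [AddCommGroup H] [Module ℂ H] (c c' : C) (ξ : H) :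
    gAct C H c (c' ⊗ₜ ξ) = (c * c') ⊗ₜ ξ := rfl

theorem gForm_act {C H : Type*} [Ring C] [StarRing C] [Algebra ℂ C] [StarModule ℂ C]
    [NormedAddCommGroup H] [InnerProductSpace ℂ H] (θ : C →ₗ[ℂ] (H →L[ℂ] H))
    (c : C) (x y : C ⊗[ℂ] H) :
    gForm θ (gAct C H c x) y = gForm θ x (gAct C H (star c) y) := by
  induction x using TensorProduct.induction_on with
  | zero => simp
  | add x x' h h' => simp [h, h']
  | tmul a ξ =>
    induction y using TensorProduct.induction_on with
    | zero => simp
    | add x x' h h' => simp only [map_add, h, h']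
    | tmul b η => simp [gAct_tmul, gForm_tmul, mul_assoc]

theorem exists_pure_sum {A B H : Type*} [AddCommGroup A] [Module ℂ A] [AddCommGroup B] [Module ℂ B]
    [AddCommGroup H] [Module ℂ H] (x : (A ⊗[ℂ] B) ⊗[ℂ] H) :
    ∃ (n : ℕ) (a : Fin n → A) (b : Fin n → B) (ξ : Fin n → H),
      x = ∑ i, (a i ⊗ₜ[ℂ] b i) ⊗ₜ[ℂ] ξ i := by
  have hadd : ∀ x y : (A ⊗[ℂ] B) ⊗[ℂ] H,
    (∃ (n : ℕ) (a : Fin n → A) (b : Fin n → B) (ξ : Fin n → H),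
      x = ∑ i, (a i ⊗ₜ[ℂ] b i) ⊗ₜ[ℂ] ξ i) →
    (∃ (n : ℕ) (a : Fin n → A) (b : Fin n → B) (ξ : Fin n → H),
      y = ∑ i, (a i ⊗ₜ[ℂ] b i) ⊗ₜ[ℂ] ξ i) →
    (∃ (n : ℕ) (a : Fin n → A) (b : Fin n → B) (ξ : Fin n → H),
      x + y = ∑ i, (a i ⊗ₜ[ℂ] b i) ⊗ₜ[ℂ] ξ i) := by
    rintro x y ⟨n, a, b, ξ, rfl⟩ ⟨m, a', b', ξ', rfl⟩
    exact ⟨n + m, Fin.append a a', Fin.append b b', Fin.append ξ ξ', by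
      simp [Fin.sum_univ_add]⟩
  induction x using TensorProduct.induction_on with
  | zero => exact ⟨0, 0, 0, 0, by simp⟩
  | add x y hx hy => exact hadd x y hx hy
  | tmul c η =>
    induction c using TensorProduct.induction_on with
    | zero => exact ⟨0, 0, 0, 0, by simp⟩
    | add x y hx hy => rw [TensorProduct.add_tmul]; exact hadd _ _ hx hy
    | tmul a b => exact ⟨1, fun _ => a, fun _ => b, fun _ => η, by simp⟩

theorem bdd_of_defect {C X : Type*} [Ring C] [StarRing C] [Algebra ℂ C]
    [AddCommGroup X] [Module ℂ X]
    (F : X →ₗ⋆[ℂ] X →ₗ[ℂ] ℂ) (hF : ∀ x, 0 ≤ F x x)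
    (L : C →ₐ[ℂ] Module.End ℂ X) (hL : ∀ c x y, F (L c x) y = F x (L (star c) y))
    (c d : C) (M : ℝ) (h : star d * d + star c * c = (M : ℂ) • (1 : C)) (x : X) :
    (F (L c x) (L c x)).re ≤ M * (F x x).re := by
  have h1 : F (L d x) (L d x) + F (L c x) (L c x) = (M : ℂ) * F x x := by
    rw [hL, hL, ← map_add, ← Module.End.mul_apply, ← Module.End.mul_apply, ← LinearMap.add_apply,
      ← map_mul, ← map_mul, ← map_add, h, map_smul, map_one, LinearMap.smul_apply, map_smul]
    rfl
  have h2 := (Complex.le_def.1 (hF (L d x))).1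
  have h3 := congrArg Complex.re h1
  simp at h2 h3
  linarith
end

open scoped TensorProduct

/-- Commuting unital completely positive maps dilate simultaneously
to commuting unital *-representations on a common Hilbert space. -/
theorem statement15
    {A B : Type u}
    [NormedRing A] [StarRing A] [CStarRing A] [CompleteSpace A]
    [NormedAlgebra ℂ A] [StarModule ℂ A]
    [NormedRing B] [StarRing B] [CStarRing B] [CompleteSpace B]
    [NormedAlgebra ℂ B] [StarModule ℂ B]
    {H : Type u} [NormedAddCommGroup H] [InnerProductSpace ℂ H] [CompleteSpace H]
    (φ : A →ₗ[ℂ] (H →L[ℂ] H)) (ψ : B →ₗ[ℂ] (H →L[ℂ] H))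
    (hφcp : IsCPMapCStar φ) (hψcp : IsCPMapCStar ψ)
    (hφ1 : φ 1 = 1) (hψ1 : ψ 1 = 1)
    (hcomm : ∀ (a : A) (b : B), Commute (φ a) (ψ b)) :
    ∃ (𝕂 : HilbertC.{u}) (V : H →L[ℂ] 𝕂.carrier)
      (π : A →⋆ₐ[ℂ] (𝕂.carrier →L[ℂ] 𝕂.carrier))
      (ρ : B →⋆ₐ[ℂ] (𝕂.carrier →L[ℂ] 𝕂.carrier)),
      (∀ ξ : H, ‖V ξ‖ = ‖ξ‖) ∧
      (∀ (a : A) (b : B), Commute (π a) (ρ b)) ∧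
      (∀ (a : A) (b : B),
        (φ a) ∘L (ψ b) = (adjoint V) ∘L (π a) ∘L (ρ b) ∘L V) := by
  let θ : TensorProduct ℂ A B →ₗ[ℂ] (H →L[ℂ] H) :=
    TensorProduct.lift ((LinearMap.mul ℂ (H →L[ℂ] H)).compl₁₂ φ ψ)
  have hθ : ∀ a b, θ (a ⊗ₜ[ℂ] b) = φ a * ψ b := fun _ _ => rfl
  have hF : ∀ x, 0 ≤ gForm θ x x := by
    intro x
    obtain ⟨n, a, b, ξ, rfl⟩ := exists_pure_sum x
    have h := schur_pos (fun i j => φ (star (a i) * a j)) (fun i j => ψ (star (b i) * b j))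
      (cp_gram hφcp a) (cp_gram hψcp b) (fun _ _ _ _ => hcomm _ _) ξ
    have e : ∀ i j, gForm θ ((a i ⊗ₜ[ℂ] b i) ⊗ₜ[ℂ] ξ i) ((a j ⊗ₜ[ℂ] b j) ⊗ₜ[ℂ] ξ j) =
        (⟪ξ i, φ (star (a i) * a j) (ψ (star (b i) * b j) (ξ j))⟫ : ℂ) := by
      intro i j
      rw [gForm_tmul, TensorProduct.star_tmul, Algebra.TensorProduct.tmul_mul_tmul, hθ]
      rfl
    simp only [map_sum, LinearMap.sum_apply, e]
    rw [Finset.sum_comm]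
    exact h
  have hL := gForm_act θ
  have hA : ∀ a : A, ∃ M : ℝ, 0 ≤ M ∧ ∀ x, (gForm θ (gAct _ H (a ⊗ₜ[ℂ] (1 : B)) x)
      (gAct _ H (a ⊗ₜ[ℂ] (1 : B)) x)).re ≤ M * (gForm θ x x).re := by
    intro a
    obtain ⟨M, d, hM, h⟩ := exists_defect a
    refine ⟨M, hM, bdd_of_defect _ hF _ hL _ (d ⊗ₜ[ℂ] (1 : B)) M ?_⟩
    simp only [TensorProduct.star_tmul, Algebra.TensorProduct.tmul_mul_tmul, star_one, mul_one,
      ← TensorProduct.add_tmul, h]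
    rfl
  have hB : ∀ b : B, ∃ M : ℝ, 0 ≤ M ∧ ∀ x, (gForm θ (gAct _ H ((1 : A) ⊗ₜ[ℂ] b) x)
      (gAct _ H ((1 : A) ⊗ₜ[ℂ] b) x)).re ≤ M * (gForm θ x x).re := by
    intro b
    obtain ⟨M, d, hM, h⟩ := exists_defect b
    refine ⟨M, hM, bdd_of_defect _ hF _ hL _ ((1 : A) ⊗ₜ[ℂ] d) M ?_⟩
    simp only [TensorProduct.star_tmul, Algebra.TensorProduct.tmul_mul_tmul, star_one, mul_one,
      ← TensorProduct.tmul_add, h, TensorProduct.tmul_smul]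
    rfl
  have hb : ∀ c : TensorProduct ℂ A B, ∃ M : ℝ, 0 ≤ M ∧ ∀ x,
      (gForm θ (gAct _ H c x) (gAct _ H c x)).re ≤ M * (gForm θ x x).re := by
    intro c
    induction c using TensorProduct.induction_on with
    | zero => exact ⟨0, le_rfl, fun x => by simp⟩
    | tmul a b =>
      obtain ⟨M, hM, h⟩ := hA a
      obtain ⟨M', hM', h'⟩ := hB b
      refine ⟨M * M', by positivity, fun x => ?_⟩
      have e : a ⊗ₜ[ℂ] b = (a ⊗ₜ[ℂ] (1 : B)) * ((1 : A) ⊗ₜ[ℂ] b) := by simp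
      rw [e, map_mul, Module.End.mul_apply]
      refine (h _).trans ?_
      rw [mul_assoc]
      exact mul_le_mul_of_nonneg_left (h' x) hM
    | add c d hc hd =>
      obtain ⟨M, hM, h⟩ := hc
      obtain ⟨M', hM', h'⟩ := hd
      refine ⟨2 * M + 2 * M', by positivity, fun x => ?_⟩
      have h1 := h x
      have h2 := h' x
      have h3 := (Complex.le_def.1 (hF (gAct _ H c x - gAct _ H d x))).1
      simp only [map_add, map_sub, LinearMap.add_apply, LinearMap.sub_apply, Complex.add_re,
        Complex.sub_re, Complex.zero_re] at h3 ⊢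
      linarith
  obtain ⟨K, ι, τ, hι, hτ⟩ := gns_abstract (gForm θ) hF (gAct _ H) hL hb
  let V₀ : H →ₗ[ℂ] K.carrier := ι ∘ₗ TensorProduct.mk ℂ (TensorProduct ℂ A B) H 1
  have hV₀ : ∀ ξ, V₀ ξ = ι ((1 : TensorProduct ℂ A B) ⊗ₜ[ℂ] ξ) := fun _ => rfl
  have hin : ∀ (c : TensorProduct ℂ A B) ξ η, (⟪V₀ ξ, τ c (V₀ η)⟫ : ℂ) = ⟪ξ, θ c η⟫ := by
    intro c ξ η
    rw [hV₀, hV₀, hτ, hι, gAct_tmul, gForm_tmul]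
    simp
  have hθ1 : θ 1 = 1 := by
    rw [Algebra.TensorProduct.one_def, hθ, hφ1, hψ1, one_mul]
  have hnorm : ∀ ξ, ‖V₀ ξ‖ = ‖ξ‖ := by
    intro ξ
    have h := hin 1 ξ ξ
    rw [map_one, hθ1] at h
    rw [← sq_eq_sq₀ (norm_nonneg _) (norm_nonneg _), @norm_sq_eq_re_inner ℂ,
      @norm_sq_eq_re_inner ℂ]
    exact congrArg _ h
  let V : H →L[ℂ] K.carrier := V₀.mkContinuous 1 fun ξ => by rw [hnorm, one_mul]
  let jA : A →⋆ₐ[ℂ] TensorProduct ℂ A B :=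
    { Algebra.TensorProduct.includeLeft (R := ℂ) (S := ℂ) (A := A) (B := B) with
      map_star' := fun a => by simp [TensorProduct.star_tmul] }
  let jB : B →⋆ₐ[ℂ] TensorProduct ℂ A B :=
    { Algebra.TensorProduct.includeRight (R := ℂ) (A := A) (B := B) with
      map_star' := fun a => by simp [TensorProduct.star_tmul] }
  have hjA : ∀ a, jA a = a ⊗ₜ[ℂ] (1 : B) := fun _ => rfl
  have hjB : ∀ b, jB b = (1 : A) ⊗ₜ[ℂ] b := fun _ => rfl
  refine ⟨K, V, τ.comp jA, τ.comp jB, hnorm, ?_, ?_⟩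
  · intro a b
    change τ (jA a) * τ (jB b) = τ (jB b) * τ (jA a)
    rw [← map_mul, ← map_mul, hjA, hjB]
    simp
  · intro a b
    ext η
    refine ext_inner_left ℂ fun ξ => ?_
    simp only [ContinuousLinearMap.comp_apply]
    rw [adjoint_inner_right]
    have h := hin (jA a * jB b) ξ η
    rw [map_mul] at h
    refine Eq.trans ?_ h.symm
    rw [hjA, hjB]
    simp [hθ]
end

section
/- Let m, n ≥ 1, let ξ ∈ ℂ^m and η ∈ ℂ^n be unit vectors, and let σ be a density operator on ℂ^m ⊗ ℂ^n. Then sup_{Γ∈Q_loc} Tr(Γ(ξξ* ⊗ ηη*) σ), where Q_loc is the set of local QNS correlations over ([m],[n],[m],[n]), equals sup { Tr(ρσ) : ρ a separable density operator on ℂ^m ⊗ ℂ^n }, where a density operator is separable if it is a convex combination of tensor products ρ₁ ⊗ ρ₂ of density operators on ℂ^m and ℂ^n. Moreover, if σ is not separable, then this common value is strictly less than 1. -/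
open Matrix
open scoped Kronecker ComplexOrder

/-- The amplification `id_{M_m} ⊗ Φ` of a linear map `Φ : M_X → M_A`. -/
def matAmpl {X A : Type*} (m : ℕ)
    (Φ : Matrix X X ℂ →ₗ[ℂ] Matrix A A ℂ)
    (M : Matrix (Fin m × X) (Fin m × X) ℂ) :
    Matrix (Fin m × A) (Fin m × A) ℂ :=
  Matrix.of fun p q => Φ (Matrix.of fun x x' => M (p.1, x) (q.1, x')) p.2 q.2

/-- Complete positivity of a linear map `Φ : M_X → M_A`. -/
def IsCPMap {X A : Type*} [Fintype X] [Fintype A]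
    (Φ : Matrix X X ℂ →ₗ[ℂ] Matrix A A ℂ) : Prop :=
  ∀ (m : ℕ) (M : Matrix (Fin m × X) (Fin m × X) ℂ),
    M.PosSemidef → (matAmpl m Φ M).PosSemidef

/-- A quantum channel is a completely positive trace-preserving linear map. -/
def IsQChannel {X A : Type*} [Fintype X] [Fintype A]
    (Φ : Matrix X X ℂ →ₗ[ℂ] Matrix A A ℂ) : Prop :=
  IsCPMap Φ ∧ ∀ M : Matrix X X ℂ, (Φ M).trace = M.trace

/-- Local QNS correlations: convex combinations of tensor products of quantum
channels (on product matrices). -/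
def IsLocalCorrelation {X Y A B : Type} [Fintype X] [Fintype Y] [Fintype A] [Fintype B]
    (Γ : Matrix (X × Y) (X × Y) ℂ →ₗ[ℂ] Matrix (A × B) (A × B) ℂ) : Prop :=
  ∃ (k : ℕ)
    (Φ : Fin k → (Matrix X X ℂ →ₗ[ℂ] Matrix A A ℂ))
    (Ψ : Fin k → (Matrix Y Y ℂ →ₗ[ℂ] Matrix B B ℂ))
    (lam : Fin k → ℝ),
    (∀ i, IsQChannel (Φ i)) ∧ (∀ i, IsQChannel (Ψ i)) ∧
    (∀ i, 0 ≤ lam i) ∧ (∑ i, lam i = 1) ∧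
    (∀ (ρ : Matrix X X ℂ) (τ : Matrix Y Y ℂ),
      Γ (ρ ⊗ₖ τ) = ∑ i, (lam i : ℂ) • ((Φ i ρ) ⊗ₖ (Ψ i τ)))

/-- Separable density operators on `ℂ^m ⊗ ℂ^n`. -/
def IsSeparableDensity {m n : ℕ}
    (ρ : Matrix (Fin m × Fin n) (Fin m × Fin n) ℂ) : Prop :=
  ∃ (k : ℕ)
    (ρ₁ : Fin k → Matrix (Fin m) (Fin m) ℂ)
    (ρ₂ : Fin k → Matrix (Fin n) (Fin n) ℂ)
    (lam : Fin k → ℝ),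
    (∀ i, (ρ₁ i).PosSemidef ∧ (ρ₁ i).trace = 1) ∧
    (∀ i, (ρ₂ i).PosSemidef ∧ (ρ₂ i).trace = 1) ∧
    (∀ i, 0 ≤ lam i) ∧ (∑ i, lam i = 1) ∧
    ρ = ∑ i, (lam i : ℂ) • ((ρ₁ i) ⊗ₖ (ρ₂ i))

def IsDens {X : Type*} [Fintype X] (M : Matrix X X ℂ) : Prop := M.PosSemidef ∧ M.trace = 1

lemma IsDens.kron {m n : ℕ} {a : Matrix (Fin m) (Fin m) ℂ} {b : Matrix (Fin n) (Fin n) ℂ}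
    (ha : IsDens a) (hb : IsDens b) : IsDens (a ⊗ₖ b) :=
  ⟨ha.1.kronecker hb.1, by rw [trace_kronecker, ha.2, hb.2, one_mul]⟩

lemma entry_sq {X : Type*} [Fintype X] {M : Matrix X X ℂ} (h : M.PosSemidef) (i j : X) :
    ‖M i j‖ ^ 2 ≤ (M i i).re * (M j j).re := by
  have h2 := (h.submatrix ![i, j]).det_nonneg
  have hi : 0 ≤ M i i := h.diag_nonneg
  have hj : 0 ≤ M j j := h.diag_nonneg
  have hij : M j i = star (M i j) := (h.1.apply j i).symm
  rw [det_fin_two] at h2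
  simp only [submatrix_apply, cons_val_zero, cons_val_one] at h2
  rw [hij] at h2
  have h3 := (Complex.le_def.1 h2).1
  have e1 := (Complex.le_def.1 hi).2
  have e2 := (Complex.le_def.1 hj).2
  simp only [Complex.zero_im] at e1 e2
  rw [Complex.sq_norm, Complex.normSq_apply]
  simp [Complex.mul_re, ← e1, ← e2] at h3
  linarith

lemma frob_le {X : Type*} [Fintype X] {M : Matrix X X ℂ} (h : IsDens M) :
    ∑ i, ∑ j, ‖M i j‖ ^ 2 ≤ 1 := by
  have ht : ∑ i, (M i i).re = 1 := by
    have := congrArg Complex.re h.2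
    simpa [Matrix.trace] using this
  calc _ ≤ ∑ i, ∑ j, (M i i).re * (M j j).re :=
        Finset.sum_le_sum fun i _ => Finset.sum_le_sum fun j _ => entry_sq h.1 i j
    _ = 1 := by rw [← Finset.sum_mul_sum, ht, one_mul]

lemma entry_le {X : Type*} [Fintype X] {M : Matrix X X ℂ} (h : IsDens M) (i j : X) :
    ‖M i j‖ ≤ 1 := by
  have h1 : ‖M i j‖ ^ 2 ≤ 1 := by
    refine le_trans ?_ (frob_le h)
    refine le_trans ?_ (Finset.single_le_sum (f := fun i => ∑ j, ‖M i j‖ ^ 2)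
      (fun i _ => by positivity) (Finset.mem_univ i))
    exact Finset.single_le_sum (f := fun j => ‖M i j‖ ^ 2)
      (fun i _ => by positivity) (Finset.mem_univ j)
  nlinarith [norm_nonneg (M i j)]

lemma frob_dist {X : Type*} [Fintype X] {M N : Matrix X X ℂ} (h : IsDens M) (h' : IsDens N) :
    ∑ i, ∑ j, ‖M i j - N i j‖ ^ 2 ≤ 2 - 2 * (M * N).trace.re := by
  have e : ∑ i, ∑ j, ‖M i j - N i j‖ ^ 2 =
      ∑ i, ∑ j, ‖M i j‖ ^ 2 + ∑ i, ∑ j, ‖N i j‖ ^ 2 - 2 * (M * N).trace.re := by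
    simp only [Matrix.trace, Matrix.diag, Matrix.mul_apply, Complex.re_sum, Finset.mul_sum,
      ← Finset.sum_add_distrib, ← Finset.sum_sub_distrib]
    refine Finset.sum_congr rfl fun i _ => Finset.sum_congr rfl fun j _ => ?_
    have : N j i = star (N i j) := (h'.1.1.apply j i).symm
    rw [this]
    simp only [Complex.sq_norm, Complex.normSq_apply]
    simp
    ring
  rw [e]
  linarith [frob_le h, frob_le h']

lemma isCompact_dens {X : Type*} [Fintype X] : IsCompact {M : Matrix X X ℂ | IsDens M} := by
  have hK : IsCompact (Set.pi Set.univ fun _ : X => Set.pi Set.univ fun _ : X =>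
      Metric.closedBall (0 : ℂ) 1) :=
    isCompact_univ_pi fun _ => isCompact_univ_pi fun _ => isCompact_closedBall _ _
  refine IsCompact.of_isClosed_subset (X := X → X → ℂ) hK ?_ ?_
  · have : {M : Matrix X X ℂ | IsDens M} =
        {M | Mᴴ = M} ∩ (⋂ x : X → ℂ, {M | 0 ≤ star x ⬝ᵥ (M *ᵥ x)}) ∩ {M | M.trace = 1} := by
      ext M
      simp [IsDens, Matrix.posSemidef_iff_dotProduct_mulVec, Matrix.IsHermitian]
    change IsClosed {M : Matrix X X ℂ | IsDens M}
    rw [this]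
    refine ((isClosed_eq (by fun_prop) (by fun_prop)).inter
      (isClosed_iInter fun x => ?_)).inter (isClosed_eq (by fun_prop) (by fun_prop))
    exact isClosed_le (by fun_prop) (by fun_prop)
  · intro M hM i _ j _
    simpa using entry_le hM i j

lemma chan_dens {X A : Type*} [Fintype X] [Fintype A] {Φ : Matrix X X ℂ →ₗ[ℂ] Matrix A A ℂ}
    (h : IsQChannel Φ) {M : Matrix X X ℂ} (hM : IsDens M) : IsDens (Φ M) := by
  refine ⟨?_, by rw [h.2, hM.2]⟩
  have := (h.1 1 (M.submatrix Prod.snd Prod.snd) (hM.1.submatrix _)).submatrix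
    (fun a : A => ((0 : Fin 1), a))
  exact this

def constChan {X A : Type*} [Fintype X] (ρ : Matrix A A ℂ) :
    Matrix X X ℂ →ₗ[ℂ] Matrix A A ℂ :=
  (Matrix.traceLinearMap X ℂ ℂ).smulRight ρ

lemma constChan_apply {X A : Type*} [Fintype X] (ρ : Matrix A A ℂ) (M : Matrix X X ℂ) :
    constChan ρ M = M.trace • ρ := rfl

lemma constChan_chan {X A : Type*} [Fintype X] [Fintype A] {ρ : Matrix A A ℂ} (h : IsDens ρ) :
    IsQChannel (constChan (X := X) ρ) := by
  classical
  refine ⟨fun k M hM => ?_, fun M => by simp [constChan_apply, h.2]⟩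
  have h1 : (∑ x : X, M.submatrix (fun p : Fin k => (p, x)) (fun p => (p, x))).PosSemidef :=
    Matrix.posSemidef_sum _ fun x _ => hM.submatrix _
  have h2 := h1.kronecker h.1
  have e : matAmpl k (constChan ρ) M =
      (∑ x : X, M.submatrix (fun p : Fin k => (p, x)) (fun p => (p, x))) ⊗ₖ ρ := by
    ext p q
    simp [matAmpl, constChan_apply, Matrix.trace, Matrix.sum_apply, kroneckerMap_apply]
  rw [e]; exact h2

lemma dens_vec {m : ℕ} {ξ : Fin m → ℂ} (hξ : ∑ i, ‖ξ i‖ ^ 2 = 1) :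
    IsDens (Matrix.vecMulVec ξ (star ξ)) := by
  refine ⟨Matrix.posSemidef_vecMulVec_self_star ξ, ?_⟩
  simp only [Matrix.trace, Matrix.diag, Matrix.vecMulVec_apply, Pi.star_apply]
  have : ∀ i, ξ i * star (ξ i) = ((‖ξ i‖ ^ 2 : ℝ) : ℂ) := fun i => by
    push_cast; exact Complex.mul_conj' _
  simp only [this]
  rw [← Complex.ofReal_sum, hξ, Complex.ofReal_one]

/-- The local value of the game `(ξ ⊗ η, σ)` equals the maximal
overlap of `σ` with separable states; it is `< 1` when `σ` is entangled. -/
theorem statement17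
    (m n : ℕ) (hm : 1 ≤ m) (hn : 1 ≤ n)
    (ξ : Fin m → ℂ) (hξ : ∑ i, ‖ξ i‖ ^ 2 = 1)
    (η : Fin n → ℂ) (hη : ∑ j, ‖η j‖ ^ 2 = 1)
    (σ : Matrix (Fin m × Fin n) (Fin m × Fin n) ℂ)
    (hσ : σ.PosSemidef ∧ σ.trace = 1) :
    (sSup {t : ℝ | ∃ Γ : Matrix (Fin m × Fin n) (Fin m × Fin n) ℂ →ₗ[ℂ]
          Matrix (Fin m × Fin n) (Fin m × Fin n) ℂ,
        IsLocalCorrelation Γ ∧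
        (t : ℂ) = Matrix.trace
          (Γ ((Matrix.vecMulVec ξ (star ξ)) ⊗ₖ (Matrix.vecMulVec η (star η))) * σ)}
      = sSup {t : ℝ | ∃ ρ : Matrix (Fin m × Fin n) (Fin m × Fin n) ℂ,
          IsSeparableDensity ρ ∧ (t : ℂ) = Matrix.trace (ρ * σ)}) ∧
    (¬ IsSeparableDensity σ →
      sSup {t : ℝ | ∃ ρ : Matrix (Fin m × Fin n) (Fin m × Fin n) ℂ,
          IsSeparableDensity ρ ∧ (t : ℂ) = Matrix.trace (ρ * σ)} < 1) := by
  constructor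
  · congr 1
    ext t
    constructor
    · rintro ⟨Γ, ⟨k, Φ, Ψ, lam, hΦ, hΨ, h0, h1, hΓ⟩, ht⟩
      exact ⟨_, ⟨k, fun i => Φ i _, fun i => Ψ i _, lam, fun i => chan_dens (hΦ i) (dens_vec hξ),
        fun i => chan_dens (hΨ i) (dens_vec hη), h0, h1, hΓ _ _⟩, ht⟩
    · rintro ⟨ρ, ⟨k, ρ₁, ρ₂, lam, hρ₁, hρ₂, h0, h1, hρ⟩, ht⟩
      refine ⟨constChan ρ, ⟨k, fun i => constChan (ρ₁ i), fun i => constChan (ρ₂ i), lam,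
        fun i => constChan_chan (hρ₁ i), fun i => constChan_chan (hρ₂ i), h0, h1, ?_⟩, ?_⟩
      · intro a b
        rw [constChan_apply, hρ, trace_kronecker, Finset.smul_sum]
        refine Finset.sum_congr rfl fun i _ => ?_
        rw [constChan_apply, constChan_apply, smul_kronecker, kronecker_smul, smul_smul, smul_smul,
          smul_smul]
        congr 1
        ring
      · rw [constChan_apply, ((dens_vec hξ).kron (dens_vec hη)).2, one_smul, ht]
  · intro hns
    obtain ⟨⟨a, b⟩, ⟨ha, hb⟩, hmax⟩ := (isCompact_dens.prod isCompact_dens).exists_isMaxOn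
      (f := fun p : Matrix (Fin m) (Fin m) ℂ × Matrix (Fin n) (Fin n) ℂ =>
        ((p.1 ⊗ₖ p.2) * σ).trace.re)
      ⟨(_, _), dens_vec hξ, dens_vec hη⟩ (by
        refine Continuous.continuousOn ?_
        have : Continuous fun p : Matrix (Fin m) (Fin m) ℂ × Matrix (Fin n) (Fin n) ℂ =>
            p.1 ⊗ₖ p.2 := by
          refine continuous_matrix fun i j => ?_
          simp only [kroneckerMap_apply]
          exact (continuous_fst.matrix_elem _ _).mul (continuous_snd.matrix_elem _ _)
        fun_prop)
    have hlt : ((a ⊗ₖ b) * σ).trace.re < 1 := by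
      by_contra hge
      push Not at hge
      have hd := frob_dist (IsDens.kron ha hb) hσ
      apply hns
      have : σ = a ⊗ₖ b := by
        ext i j
        have h0 : ‖(a ⊗ₖ b) i j - σ i j‖ ^ 2 ≤ 0 := by
          refine le_trans ?_ (hd.trans (by linarith))
          refine le_trans ?_ (Finset.single_le_sum
            (f := fun i => ∑ j, ‖(a ⊗ₖ b) i j - σ i j‖ ^ 2)
            (fun i _ => by positivity) (Finset.mem_univ i))
          exact Finset.single_le_sum (f := fun j => ‖(a ⊗ₖ b) i j - σ i j‖ ^ 2)
            (fun i _ => by positivity) (Finset.mem_univ j)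
        have h1 : ‖(a ⊗ₖ b) i j - σ i j‖ = 0 := by
          nlinarith [norm_nonneg ((a ⊗ₖ b) i j - σ i j)]
        exact (sub_eq_zero.1 (norm_eq_zero.1 h1)).symm
      exact ⟨1, fun _ => a, fun _ => b, fun _ => 1, fun _ => ha, fun _ => hb, fun _ => zero_le_one,
        by simp, by simpa using this⟩
    refine lt_of_le_of_lt (Real.sSup_le (a := max 0 ((a ⊗ₖ b) * σ).trace.re) ?_ (le_max_left _ _))
      (max_lt one_pos hlt)
    rintro t ⟨ρ, ⟨k, ρ₁, ρ₂, lam, hρ₁, hρ₂, h0, h1, rfl⟩, ht⟩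
    refine le_trans ?_ (le_max_right _ _)
    have ht' : t = ∑ i, lam i * ((ρ₁ i ⊗ₖ ρ₂ i) * σ).trace.re := by
      have := congrArg Complex.re ht
      rw [Complex.ofReal_re] at this
      rw [this, Finset.sum_mul, trace_sum, Complex.re_sum]
      refine Finset.sum_congr rfl fun i _ => ?_
      rw [smul_mul_assoc, trace_smul, smul_eq_mul, Complex.re_ofReal_mul]
    rw [ht']
    calc _ ≤ ∑ i, lam i * ((a ⊗ₖ b) * σ).trace.re :=
          Finset.sum_le_sum fun i _ => mul_le_mul_of_nonneg_left
            (hmax (show (ρ₁ i, ρ₂ i) ∈ _ from ⟨hρ₁ i, hρ₂ i⟩)) (h0 i)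
      _ = _ := by rw [← Finset.sum_mul, h1, one_mul]
end

section
/- Let m, n ≥ 1, let ξ ∈ ℂ^m and η ∈ ℂ^n be unit vectors, and let σ be a density operator on ℂ^m ⊗ ℂ^n. Then there exist finite-dimensional complex Hilbert spaces H_A, K_A, H_B, K_B, a block operator isometry U = (U_{a,x})_{a,x∈[m]} with entries in B(H_A,K_A), a block operator isometry V = (V_{b,y})_{b,y∈[n]} with entries in B(H_B,K_B), and a density operator σ₀ on H_A ⊗ H_B, such that the linear map Γ : M_{[m]×[n]} → M_{[m]×[n]} defined by Γ(ε_{x,x'} ⊗ ε_{y,y'}) = Σ_{a,a',b,b'} Tr(σ₀ (U_{a,x}* U_{a',x'} ⊗ V_{b,y}* V_{b',y'})) ε_{a,a'} ⊗ ε_{b,b'} satisfies Γ(ξξ* ⊗ ηη*) = σ. In particular, every state on ℂ^m ⊗ ℂ^n can be produced from any pure product state by a QNS correlation of quantum type. -/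
open Matrix
open scoped Kronecker ComplexOrder

/-- A block operator isometry over `(X, A)` with finite-dimensional entries,
given as a family of `k × d` matrices. -/
def IsBlockIsometryFam {X A : Type*} [Fintype A] [DecidableEq X]
    {d k : ℕ} (U : A → X → Matrix (Fin k) (Fin d) ℂ) : Prop :=
  ∀ x x' : X, ∑ a : A, (U a x)ᴴ * (U a x') = if x = x' then 1 else 0

/-- Every state on `ℂ^m ⊗ ℂ^n` can be produced from any pure
product state by a QNS correlation of quantum type. -/
theorem statement18
    (m n : ℕ) (hm : 1 ≤ m) (hn : 1 ≤ n)
    (ξ : Fin m → ℂ) (hξ : ∑ i, ‖ξ i‖ ^ 2 = 1)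
    (η : Fin n → ℂ) (hη : ∑ j, ‖η j‖ ^ 2 = 1)
    (σ : Matrix (Fin m × Fin n) (Fin m × Fin n) ℂ)
    (hσ : σ.PosSemidef ∧ σ.trace = 1) :
    ∃ (dA kA dB kB : ℕ)
      (U : Fin m → Fin m → Matrix (Fin kA) (Fin dA) ℂ)
      (V : Fin n → Fin n → Matrix (Fin kB) (Fin dB) ℂ)
      (σ₀ : Matrix (Fin dA × Fin dB) (Fin dA × Fin dB) ℂ),
      IsBlockIsometryFam U ∧ IsBlockIsometryFam V ∧
      σ₀.PosSemidef ∧ σ₀.trace = 1 ∧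
      ∀ (a : Fin m) (b : Fin n) (a' : Fin m) (b' : Fin n),
        (∑ x : Fin m, ∑ x' : Fin m, ∑ y : Fin n, ∑ y' : Fin n,
            ξ x * (starRingEnd ℂ) (ξ x') * η y * (starRingEnd ℂ) (η y') *
              Matrix.trace (σ₀ * (((U a x)ᴴ * U a' x') ⊗ₖ ((V b y)ᴴ * V b' y'))))
          = σ (a, b) (a', b') := by
  have hU : ∀ (k : ℕ) (a x a' x' : Fin k),
      (Matrix.single x a (1 : ℂ))ᴴ * Matrix.single x' a' (1 : ℂ)
        = if x = x' then Matrix.single a a' 1 else 0 := by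
    intro k a x a' x'
    rw [Matrix.conjTranspose_single]
    split_ifs with h
    · subst h
      simp
    · rw [Matrix.single_mul_single_of_ne _ _ _ _ h]
  have hI : ∀ k : ℕ, IsBlockIsometryFam
      (fun a x : Fin k => Matrix.single x a (1 : ℂ)) := by
    intro k x x'
    simp only [hU]
    split_ifs with h
    · exact Matrix.sum_single_one
    · simp
  have hN : ∀ (k : ℕ) (v : Fin k → ℂ), ∑ i, ‖v i‖ ^ 2 = 1 →
      ∑ i, v i * (starRingEnd ℂ) (v i) = 1 := by
    intro k v hv
    simp only [Complex.mul_conj']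
    exact_mod_cast hv
  refine ⟨m, m, n, n, fun a x => Matrix.single x a 1, fun b y => Matrix.single y b 1,
    σᵀ, hI m, hI n, hσ.1.transpose, by rw [Matrix.trace_transpose]; exact hσ.2, ?_⟩
  intro a b a' b'
  have key : ∀ x x' y y', Matrix.trace (σᵀ * (((Matrix.single x a (1 : ℂ))ᴴ * Matrix.single x' a' (1 : ℂ)) ⊗ₖ
      ((Matrix.single y b (1 : ℂ))ᴴ * Matrix.single y' b' (1 : ℂ))))
      = if x = x' then (if y = y' then σ (a, b) (a', b') else 0) else 0 := by
    intro x x' y y'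
    rw [hU, hU]
    split_ifs
    · rw [Matrix.single_kronecker_single, Matrix.trace_mul_single]
      simp
    all_goals simp
  simp only [key]
  simp only [mul_ite, mul_zero, Finset.sum_ite_eq, Finset.mem_univ, if_true, Finset.sum_ite_irrel, Finset.sum_const_zero]
  calc _ = (∑ x, ξ x * (starRingEnd ℂ) (ξ x)) * (∑ y, η y * (starRingEnd ℂ) (η y)) * σ (a, b) (a', b') := by
        rw [Finset.sum_mul_sum, Finset.sum_mul]
        refine Finset.sum_congr rfl fun x _ => ?_
        rw [Finset.sum_mul]
        refine Finset.sum_congr rfl fun y _ => ?_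
        ring
    _ = _ := by rw [hN m ξ hξ, hN n η hη]; ring
end
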